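/- arXiv:math/9907094 — 3 statements merged into one kernel-verified Lean document; each statement's English description precedes it below -/
import Mathlib

section
/- Let L : ℝⁿ →L[ℝ] ℝⁿ be a continuous linear map, B a continuous bilinear map ℝⁿ → ℝⁿ → ℝⁿ, T a continuous trilinear map ℝⁿ → ℝⁿ → ℝⁿ → ℝⁿ, b ∈ ℝⁿ, f(x) = L x + B(x,x) + T(x,x,x) + b, and f̃(x) = L x + 2 • B(x,x) + 3 • T(x,x,x). Then for any two points x_k, x_{k-1} ∈ ℝⁿ, (D f(x_k))(x_k) − (D f(x_{k-1}))(x_{k-1}) = f̃(x_k) − f̃(x_{k-1}). -/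
theorem exact_quasi_newton_relation (n : ℕ)
    (L : EuclideanSpace ℝ (Fin n) →L[ℝ] EuclideanSpace ℝ (Fin n))
    (B : EuclideanSpace ℝ (Fin n) →L[ℝ] EuclideanSpace ℝ (Fin n) →L[ℝ] EuclideanSpace ℝ (Fin n))
    (T : EuclideanSpace ℝ (Fin n) →L[ℝ] EuclideanSpace ℝ (Fin n) →L[ℝ]
         EuclideanSpace ℝ (Fin n) →L[ℝ] EuclideanSpace ℝ (Fin n))
    (b : EuclideanSpace ℝ (Fin n))
    (f ftilde : EuclideanSpace ℝ (Fin n) → EuclideanSpace ℝ (Fin n))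
    (hf : ∀ x, f x = L x + B x x + T x x x + b)
    (hft : ∀ x, ftilde x = L x + 2 • B x x + 3 • T x x x)
    (xk xk1 : EuclideanSpace ℝ (Fin n)) :
    (fderiv ℝ f xk) xk - (fderiv ℝ f xk1) xk1 = ftilde xk - ftilde xk1 := by
  have key : ∀ x, (fderiv ℝ f x) x = ftilde x := by
    intro x
    have hfe : f = fun x => L x + B x x + T x x x + b := funext hf
    have hB := B.hasFDerivAt (x := x) |>.clm_apply (hasFDerivAt_id (𝕜 := ℝ) x)
    have hT := (T.hasFDerivAt (x := x) |>.clm_apply (hasFDerivAt_id (𝕜 := ℝ) x)).clm_apply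
      (hasFDerivAt_id (𝕜 := ℝ) x)
    have h := (((L.hasFDerivAt (x := x)).add hB).add hT).add_const b
    have h2 := h.fderiv
    have h3 : fderiv ℝ f x = _ := (congrArg (fun g => fderiv ℝ g x) hfe).trans h2
    rw [h3, hft]
    simp
    module
  rw [key, key]
end

section
/- Let J_{k-1} be an n × n real matrix, let x_{k-1}, x_k, y ∈ ℝⁿ, set p = x_k − x_{k-1}, and assume pᵀ x_k ≠ 0. Define u = (1 / (pᵀ x_k)) • (y − J_{k-1} p) and J_k = J_{k-1} + u pᵀ (a rank-one update). Then J_k satisfies the exact update equation J_k x_k = J_{k-1} x_{k-1} + y; equivalently, J_k (x_k − x_{k-1}) = −J_k x_{k-1} + J_{k-1} x_{k-1} + y. -/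
theorem modified_bfgs_update_exact (n : ℕ)
    (Jk1 : Matrix (Fin n) (Fin n) ℝ) (xk1 xk y : Fin n → ℝ)
    (p : Fin n → ℝ) (hp : p = xk - xk1)
    (hpx : dotProduct p xk ≠ 0)
    (u : Fin n → ℝ) (hu : u = (1 / dotProduct p xk) • (y - Jk1.mulVec p))
    (Jk : Matrix (Fin n) (Fin n) ℝ) (hJk : Jk = Jk1 + Matrix.vecMulVec u p) :
    Jk.mulVec xk = Jk1.mulVec xk1 + y ∧
    Jk.mulVec (xk - xk1) = -(Jk.mulVec xk1) + Jk1.mulVec xk1 + y := by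
  have h1 : Jk.mulVec xk = Jk1.mulVec xk1 + y := by
    have h2 : (Matrix.vecMulVec u p).mulVec xk = y - Jk1.mulVec p := by
      ext i
      have h3 : (Matrix.vecMulVec u p).mulVec xk i = u i * dotProduct p xk := by
        simp only [Matrix.mulVec, dotProduct, Matrix.vecMulVec_apply, Finset.mul_sum, mul_assoc]
      rw [h3, hu, Pi.smul_apply, smul_eq_mul]
      field_simp
    rw [hJk, Matrix.add_mulVec, h2, hp, Matrix.mulVec_sub]
    abel
  refine ⟨h1, ?_⟩
  rw [Matrix.mulVec_sub, h1]
  abel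
end

section
/- Let L : ℝⁿ →L[ℝ] ℝⁿ be a continuous linear map, B a continuous bilinear map, T a continuous trilinear map, b ∈ ℝⁿ, f(x) = L x + B(x,x) + T(x,x,x) + b, and f̃(x) = L x + 2 • B(x,x) + 3 • T(x,x,x). Let x_{k-1}, x_k ∈ ℝⁿ, p = x_k − x_{k-1}, and suppose ⟪p, x_k⟫ ≠ 0. Suppose J_{k-1} is the exact Jacobian of f at x_{k-1}, i.e. J_{k-1} = D f(x_{k-1}), set y = f̃(x_k) − f̃(x_{k-1}), and define the updated operator J_k v = J_{k-1} v + (⟪p, v⟫ / ⟪p, x_k⟫) • (y − J_{k-1} p). Then J_k x_k = (D f(x_k))(x_k), i.e. the updated operator reproduces the action of the exact Jacobian at x_k on the vector x_k. -/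
theorem modified_bfgs_matches_exact_jacobian (n : ℕ)
    (L : EuclideanSpace ℝ (Fin n) →L[ℝ] EuclideanSpace ℝ (Fin n))
    (B : EuclideanSpace ℝ (Fin n) →L[ℝ] EuclideanSpace ℝ (Fin n) →L[ℝ] EuclideanSpace ℝ (Fin n))
    (T : EuclideanSpace ℝ (Fin n) →L[ℝ] EuclideanSpace ℝ (Fin n) →L[ℝ]
         EuclideanSpace ℝ (Fin n) →L[ℝ] EuclideanSpace ℝ (Fin n))
    (b : EuclideanSpace ℝ (Fin n))
    (f ftilde : EuclideanSpace ℝ (Fin n) → EuclideanSpace ℝ (Fin n))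
    (hf : ∀ x, f x = L x + B x x + T x x x + b)
    (hft : ∀ x, ftilde x = L x + 2 • B x x + 3 • T x x x)
    (xk1 xk : EuclideanSpace ℝ (Fin n))
    (p : EuclideanSpace ℝ (Fin n)) (hp : p = xk - xk1)
    (hpx : inner ℝ p xk ≠ (0 : ℝ))
    (Jk1 : EuclideanSpace ℝ (Fin n) →L[ℝ] EuclideanSpace ℝ (Fin n))
    (hJk1 : Jk1 = fderiv ℝ f xk1)
    (y : EuclideanSpace ℝ (Fin n)) (hy : y = ftilde xk - ftilde xk1)
    (Jk : EuclideanSpace ℝ (Fin n) → EuclideanSpace ℝ (Fin n))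
    (hJk : ∀ v, Jk v = Jk1 v + ((inner ℝ p v : ℝ) / (inner ℝ p xk : ℝ)) • (y - Jk1 p)) :
    Jk xk = (fderiv ℝ f xk) xk := by
  have key : ∀ x, fderiv ℝ f x x = ftilde x := by
    intro x
    have hid := hasFDerivAt_id (𝕜 := ℝ) x
    have h1 := L.hasFDerivAt (x := x)
    have h2 := (B.hasFDerivAt (x := x)).clm_apply hid
    have h3 := ((T.hasFDerivAt (x := x)).clm_apply hid).clm_apply hid
    have h := ((h1.add h2).add h3).add_const b
    have hfe : HasFDerivAt f _ x := h.congr_of_eventuallyEq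
      (Filter.Eventually.of_forall fun z => by simp [hf z])
    rw [hfe.fderiv, hft]
    simp
    module
  rw [hJk, div_self hpx, one_smul, hy, key xk, hp, map_sub, hJk1, key xk1]
  abel
end
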